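/- Let K ∈ M_n^× with s_K < t_K, where s_K = min{k ∈ [1,n+1] : k ∉ K} and t_K = max{k ∈ [1,n+1] : k ∈ K}. Then for every pair 1 ≤ i < j ≤ n+1, the complex vector space of homomorphisms of representations Hom(e((i,j);Ω(K)), e((s_K,t_K);Ω(K))) has dimension 1 if i ∉ K and j ∈ K, and dimension 0 otherwise. -/

import Mathlib

/-- A homomorphism of representations `e((i,j);Ω) → e((i',j');Ω)` of the linearly oriented
quiver on vertices `1,…,n` (the orientation `Ω` given by `dir`, where `dir k = true` means
the edge between `k` and `k+1` is the arrow `k → k+1`, and `dir k = false` means `k+1 → k`).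
Interval representations have vertex space `ℂ` exactly on the supports `S₁`, `S₂`, the
structure map along an arrow being the identity when both endpoints carry `ℂ` and `0`
otherwise; a homomorphism is a tuple of linear maps (identified with scalars `φ k ∈ ℂ` when
both spaces are `ℂ`, and `0` otherwise) making all squares commute. -/
def IsHom (n : ℕ) (dir : ℕ → Bool) (S₁ S₂ : Finset ℕ) (φ : ℕ → ℂ) : Prop :=
  (∀ k : ℕ, ¬(k ∈ S₁ ∧ k ∈ S₂) → φ k = 0) ∧
  ∀ k : ℕ, 1 ≤ k → k ≤ n - 1 →
    (if (if dir k then k else k + 1) ∈ S₁ ∧ (if dir k then k + 1 else k) ∈ S₁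
      then φ (if dir k then k + 1 else k) else 0) =
    (if (if dir k then k else k + 1) ∈ S₂ ∧ (if dir k then k + 1 else k) ∈ S₂
      then φ (if dir k then k else k + 1) else 0)

/-!
A homomorphism between two interval representations is constant on the intersection of their
supports, so it is determined by its value at one vertex, and it vanishes as soon as an arrow
enters the intersection from the rest of the first support or leaves it into the rest of the
second. The orientation `Ω(K)` is the one in which the edge between `k` and `k + 1` points
towards `k` exactly when `k + 1 ∈ K`. If `i ∈ K`, then since `s_K ∉ K` such an arrow exists at
the left end of the intersection; if `j ∉ K`, then since `t_K ∈ K` it exists at the right end.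
If `i ∉ K` and `j ∈ K`, then `s_K ≤ i` and `j ≤ t_K`, and no arrow leaves `[i, j - 1]`, so
`e((i,j))` is a subrepresentation of `e((s_K,t_K))` and its inclusion spans the homomorphisms.
-/

open Finset

/-- The arrows `p → q` of the quiver on the vertices `1, …, n` with orientation `dir`, in the
encoding of `IsHom`. -/
inductive IsArrow (n : ℕ) (dir : ℕ → Bool) : ℕ → ℕ → Prop
  | right {k : ℕ} (one_le : 1 ≤ k) (lt : k < n) (h : dir k = true) : IsArrow n dir k (k + 1)
  | left {k : ℕ} (one_le : 1 ≤ k) (lt : k < n) (h : dir k = false) : IsArrow n dir (k + 1) k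

/-- The vertex `v` is a source: no arrow points into it. -/
def IsSource (n : ℕ) (dir : ℕ → Bool) (v : ℕ) : Prop :=
  (2 ≤ v → dir (v - 1) = false) ∧ (v ≤ n - 1 → dir v = true)

/-- The vertex `v` is a sink: no arrow points out of it. -/
def IsSink (n : ℕ) (dir : ℕ → Bool) (v : ℕ) : Prop :=
  (2 ≤ v → dir (v - 1) = true) ∧ (v ≤ n - 1 → dir v = false)

/-- The orientation `Ω(K)`, described edge by edge instead of by its sources and sinks: the edge
between `k` and `k + 1` is the arrow `k → k + 1` if and only if `k + 1 ∉ K`. -/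
def OrientedBy (n : ℕ) (dir : ℕ → Bool) (K : Finset ℕ) : Prop :=
  ∀ k, 1 ≤ k → k < n → (dir k = true ↔ k + 1 ∉ K)

section Homomorphisms

variable {n : ℕ} {dir : ℕ → Bool} {S₁ S₂ : Finset ℕ} {φ : ℕ → ℂ}

theorem isHom_iff_forall_isArrow :
    IsHom n dir S₁ S₂ φ ↔ (∀ k ∉ S₁ ∩ S₂, φ k = 0) ∧ ∀ p q, IsArrow n dir p q →
      (if p ∈ S₁ ∧ q ∈ S₁ then φ q else 0) = if p ∈ S₂ ∧ q ∈ S₂ then φ p else 0 := by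
  simp only [mem_inter]
  refine and_congr_right fun _ ↦ ⟨fun hcomm p q hpq ↦ ?_, fun hcomm k hk hkn ↦ ?_⟩
  · cases hpq with
    | right hk hkn hdir => simpa [hdir] using hcomm p hk (by omega)
    | left hk hkn hdir => simpa [hdir] using hcomm q hk (by omega)
  · cases hdir : dir k
    · simpa using hcomm _ _ (.left hk (by omega) hdir)
    · simpa using hcomm _ _ (.right hk (by omega) hdir)

namespace IsHom

variable {p q x y : ℕ}

theorem apply_eq_zero (hφ : IsHom n dir S₁ S₂ φ) (hx : x ∉ S₁ ∩ S₂) : φ x = 0 :=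
  (isHom_iff_forall_isArrow.1 hφ).1 x hx

theorem comm (hφ : IsHom n dir S₁ S₂ φ) (hpq : IsArrow n dir p q) :
    (if p ∈ S₁ ∧ q ∈ S₁ then φ q else 0) = if p ∈ S₂ ∧ q ∈ S₂ then φ p else 0 :=
  (isHom_iff_forall_isArrow.1 hφ).2 p q hpq

theorem apply_target_eq_apply_source (hφ : IsHom n dir S₁ S₂ φ) (hpq : IsArrow n dir p q)
    (hp : p ∈ S₁ ∩ S₂) (hq : q ∈ S₁ ∩ S₂) : φ q = φ p := by
  rw [mem_inter] at hp hq
  simpa [hp, hq] using hφ.comm hpq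

theorem apply_target_eq_zero (hφ : IsHom n dir S₁ S₂ φ) (hpq : IsArrow n dir p q)
    (hp₁ : p ∈ S₁) (hp₂ : p ∉ S₂) (hq : q ∈ S₁) : φ q = 0 := by
  simpa [hp₁, hp₂, hq] using hφ.comm hpq

theorem apply_source_eq_zero (hφ : IsHom n dir S₁ S₂ φ) (hpq : IsArrow n dir p q)
    (hp : p ∈ S₂) (hq₁ : q ∉ S₁) (hq₂ : q ∈ S₂) : φ p = 0 := by
  simpa [hp, hq₁, hq₂] using (hφ.comm hpq).symm

theorem apply_succ_eq (hφ : IsHom n dir S₁ S₂ φ) {k : ℕ} (hk : 1 ≤ k) (hkn : k < n)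
    (hmem : k ∈ S₁ ∩ S₂) (hmem_succ : k + 1 ∈ S₁ ∩ S₂) : φ (k + 1) = φ k := by
  cases hdir : dir k
  · exact (hφ.apply_target_eq_apply_source (.left hk hkn hdir) hmem_succ hmem).symm
  · exact hφ.apply_target_eq_apply_source (.right hk hkn hdir) hmem hmem_succ

theorem apply_eq_of_Icc_subset (hφ : IsHom n dir S₁ S₂ φ) (hx : 1 ≤ x) (hxy : x ≤ y)
    (hy : y ≤ n) (hsub : Icc x y ⊆ S₁ ∩ S₂) : φ y = φ x := by
  induction y, hxy using Nat.le_induction with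
  | base => rfl
  | succ k hxk ih =>
    calc φ (k + 1) = φ k :=
          hφ.apply_succ_eq (hx.trans hxk) hy (hsub (mem_Icc.2 ⟨hxk, k.le_succ⟩))
            (hsub (right_mem_Icc.2 (hxk.trans k.le_succ)))
      _ = φ x := ih (by omega) ((Icc_subset_Icc_right k.le_succ).trans hsub)

theorem apply_eq_apply (hφ : IsHom n dir S₁ S₂ φ) (hvert : S₁ ∩ S₂ ⊆ Icc 1 n)
    (hconn : (↑(S₁ ∩ S₂) : Set ℕ).OrdConnected) (hx : x ∈ S₁ ∩ S₂) (hy : y ∈ S₁ ∩ S₂) :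
    φ y = φ x := by
  wlog hxy : x ≤ y generalizing x y
  · exact (this hy hx (le_of_not_ge hxy)).symm
  refine hφ.apply_eq_of_Icc_subset (mem_Icc.1 (hvert hx)).1 hxy (mem_Icc.1 (hvert hy)).2 ?_
  rw [← coe_subset, coe_Icc]
  exact hconn.out hx hy

theorem eq_smul_indicator (hφ : IsHom n dir S₁ S₂ φ) (hvert : S₁ ∩ S₂ ⊆ Icc 1 n)
    (hconn : (↑(S₁ ∩ S₂) : Set ℕ).OrdConnected) (hx : x ∈ S₁ ∩ S₂) :
    φ = φ x • (↑(S₁ ∩ S₂) : Set ℕ).indicator 1 := by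
  ext y
  by_cases hy : y ∈ S₁ ∩ S₂
  · rw [Pi.smul_apply, Set.indicator_of_mem (mem_coe.2 hy), Pi.one_apply, smul_eq_mul, mul_one]
    exact hφ.apply_eq_apply hvert hconn hx hy
  · rw [Pi.smul_apply, Set.indicator_of_notMem (mem_coe.not.2 hy), smul_zero]
    exact hφ.apply_eq_zero hy

theorem eq_zero_of_nonempty_imp_exists (hφ : IsHom n dir S₁ S₂ φ) (hvert : S₁ ∩ S₂ ⊆ Icc 1 n)
    (hconn : (↑(S₁ ∩ S₂) : Set ℕ).OrdConnected)
    (hzero : (S₁ ∩ S₂).Nonempty → ∃ x ∈ S₁ ∩ S₂, φ x = 0) : φ = 0 := by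
  rcases (S₁ ∩ S₂).eq_empty_or_nonempty with hempty | hne
  · exact funext fun x ↦ hφ.apply_eq_zero (by simp [hempty])
  · obtain ⟨x, hx, hφx⟩ := hzero hne
    rw [hφ.eq_smul_indicator hvert hconn hx, hφx, zero_smul]

end IsHom

theorem isHom_indicator_of_subset (hsub : S₁ ⊆ S₂)
    (hclosed : ∀ p q, IsArrow n dir p q → p ∈ S₁ → q ∈ S₁) :
    IsHom n dir S₁ S₂ ((↑S₁ : Set ℕ).indicator 1) := by
  refine isHom_iff_forall_isArrow.2 ⟨fun k hk ↦ ?_, fun p q hpq ↦ ?_⟩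
  · rw [inter_eq_left.2 hsub] at hk
    exact Set.indicator_of_notMem (mem_coe.not.2 hk) 1
  · by_cases hp : p ∈ S₁
    · have hq := hclosed p q hpq hp
      simp [hp, hq, hsub hp, hsub hq]
    · simp [hp]

theorem exists_isHom_forall_eq_smul (hvert : S₁ ⊆ Icc 1 n)
    (hconn : (↑S₁ : Set ℕ).OrdConnected) (hne : S₁.Nonempty) (hsub : S₁ ⊆ S₂)
    (hclosed : ∀ p q, IsArrow n dir p q → p ∈ S₁ → q ∈ S₁) :
    ∃ φ : ℕ → ℂ, IsHom n dir S₁ S₂ φ ∧ φ ≠ 0 ∧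
      ∀ ψ : ℕ → ℂ, IsHom n dir S₁ S₂ ψ → ∃ c : ℂ, ψ = c • φ := by
  obtain ⟨x, hx⟩ := hne
  refine ⟨(↑S₁ : Set ℕ).indicator 1, isHom_indicator_of_subset hsub hclosed, ?_, ?_⟩
  · exact fun hzero ↦ by simpa [hx] using congrFun hzero x
  · intro ψ hψ
    have hinter : S₁ ∩ S₂ = S₁ := inter_eq_left.2 hsub
    have hsmul := hψ.eq_smul_indicator (x := x) (by rwa [hinter]) (by rwa [hinter])
      (by rwa [hinter])
    rw [hinter] at hsmul
    exact ⟨ψ x, hsmul⟩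

end Homomorphisms

section Orientation

variable {n : ℕ} {dir : ℕ → Bool} {K : Finset ℕ}

theorem orientedBy_of_sources_of_sinks
    (hsource : ∀ v, 1 ≤ v → v ≤ n → (IsSource n dir v ↔
      (v ∈ K ∧ v + 1 ∉ K) ∨ (v = 1 ∧ 1 ∉ K ∧ 2 ∉ K) ∨ (v = n ∧ n + 1 ∈ K)))
    (hsink : ∀ v, 1 ≤ v → v ≤ n → (IsSink n dir v ↔
      (v ∉ K ∧ v + 1 ∈ K) ∨ (v = 1 ∧ 1 ∈ K) ∨ (v = n ∧ n ∉ K ∧ n + 1 ∉ K))) :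
    OrientedBy n dir K := by
  intro k hk
  induction k, hk using Nat.le_induction with
  | base =>
    intro h1n
    have hsource_one : dir 1 = true ↔ (1 ∈ K ∧ 2 ∉ K) ∨ (1 ∉ K ∧ 2 ∉ K) := by
      simpa [IsSource, h1n.ne, Nat.le_sub_one_of_lt h1n] using hsource 1 le_rfl h1n.le
    tauto
  | succ k hk ih =>
    intro hkn
    have hk_ne : k ≠ 0 := by omega
    have hle : k + 1 ≤ n - 1 := by omega
    have hsource_succ : dir k = false ∧ dir (k + 1) = true ↔ k + 1 ∈ K ∧ k + 2 ∉ K := by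
      simpa [IsSource, hk, hkn.ne, hk_ne, hle] using hsource (k + 1) (by omega) hkn.le
    have hsink_succ : dir k = true ∧ dir (k + 1) = false ↔ k + 1 ∉ K ∧ k + 2 ∈ K := by
      simpa [IsSink, hk, hkn.ne, hk_ne, hle] using hsink (k + 1) (by omega) hkn.le
    by_cases hmem : k + 1 ∈ K
    · have hdir_k : dir k = false := by simpa [hmem] using ih (by omega)
      simpa [hdir_k, hmem] using hsource_succ
    · have hdir_k : dir k = true := by simpa [hmem] using ih (by omega)
      have hdir_succ : dir (k + 1) = false ↔ k + 2 ∈ K := by simpa [hdir_k, hmem] using hsink_succ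
      rw [← Bool.not_eq_false, hdir_succ]

namespace OrientedBy

variable {a b k p q : ℕ}

theorem isArrow_right (hdir : OrientedBy n dir K) (hk : 1 ≤ k) (hkn : k < n)
    (hmem : k + 1 ∉ K) : IsArrow n dir k (k + 1) :=
  .right hk hkn ((hdir k hk hkn).2 hmem)

theorem isArrow_left (hdir : OrientedBy n dir K) (hk : 1 ≤ k) (hkn : k < n)
    (hmem : k + 1 ∈ K) : IsArrow n dir (k + 1) k :=
  .left hk hkn (Bool.eq_false_iff.2 fun htrue ↦ (hdir k hk hkn).1 htrue hmem)

theorem mem_Icc_of_isArrow (hdir : OrientedBy n dir K) (ha : a ∉ K) (hb : b + 1 ∈ K)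
    (hpq : IsArrow n dir p q) (hp : p ∈ Icc a b) : q ∈ Icc a b := by
  rw [mem_Icc] at hp ⊢
  cases hpq with
  | right hk hkn htrue =>
    have hne : p ≠ b := by
      rintro rfl
      exact (hdir p hk hkn).1 htrue hb
    omega
  | left hk hkn hfalse =>
    have hne : q + 1 ≠ a := by
      rintro rfl
      exact Bool.eq_false_iff.1 hfalse ((hdir q hk hkn).2 ha)
    omega

end OrientedBy

theorem ordConnected_Icc_inter_Icc (a b c d : ℕ) :
    (↑(Icc a b ∩ Icc c d) : Set ℕ).OrdConnected := by
  rw [coe_inter, coe_Icc, coe_Icc]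
  exact Set.ordConnected_Icc.inter Set.ordConnected_Icc

namespace IsHom

variable {a b c d : ℕ} {φ : ℕ → ℂ}

theorem eq_zero_of_left_mem (hφ : IsHom n dir (Icc a b) (Icc c d) φ) (hdir : OrientedBy n dir K)
    (ha : 1 ≤ a) (hb : b ≤ n) (hc : 1 ≤ c) (haK : a ∈ K) (hcK : c ∉ K) : φ = 0 := by
  refine hφ.eq_zero_of_nonempty_imp_exists (inter_subset_left.trans (Icc_subset_Icc ha hb))
    (ordConnected_Icc_inter_Icc a b c d) ?_
  rintro ⟨x, hx⟩
  simp only [mem_inter, mem_Icc] at hx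
  rcases lt_or_gt_of_ne (ne_of_mem_of_not_mem haK hcK) with hac | hca
  · obtain ⟨m, rfl⟩ := Nat.exists_eq_add_of_le' hc
    have harrow : IsArrow n dir m (m + 1) := hdir.isArrow_right (by omega) (by omega) hcK
    refine ⟨m + 1, ?_, hφ.apply_target_eq_zero harrow ?_ ?_ ?_⟩ <;>
      simp only [mem_inter, mem_Icc] <;> omega
  · obtain ⟨m, rfl⟩ := Nat.exists_eq_add_of_le' ha
    have harrow : IsArrow n dir (m + 1) m := hdir.isArrow_left (by omega) (by omega) haK
    refine ⟨m + 1, ?_, hφ.apply_source_eq_zero harrow ?_ ?_ ?_⟩ <;>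
      simp only [mem_inter, mem_Icc] <;> omega

theorem eq_zero_of_right_notMem (hφ : IsHom n dir (Icc a b) (Icc c d) φ)
    (hdir : OrientedBy n dir K) (ha : 1 ≤ a) (hb : b ≤ n) (hd : d ≤ n) (hbK : b + 1 ∉ K)
    (hdK : d + 1 ∈ K) : φ = 0 := by
  refine hφ.eq_zero_of_nonempty_imp_exists (inter_subset_left.trans (Icc_subset_Icc ha hb))
    (ordConnected_Icc_inter_Icc a b c d) ?_
  rintro ⟨x, hx⟩
  simp only [mem_inter, mem_Icc] at hx
  have hne : b ≠ d := fun h ↦ hbK (h ▸ hdK)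
  rcases lt_or_gt_of_ne hne with hbd | hdb
  · have harrow : IsArrow n dir b (b + 1) := hdir.isArrow_right (by omega) (by omega) hbK
    refine ⟨b, ?_, hφ.apply_source_eq_zero harrow ?_ ?_ ?_⟩ <;>
      simp only [mem_inter, mem_Icc] <;> omega
  · have harrow : IsArrow n dir (d + 1) d := hdir.isArrow_left (by omega) (by omega) hdK
    refine ⟨d, ?_, hφ.apply_target_eq_zero harrow ?_ ?_ ?_⟩ <;>
      simp only [mem_inter, mem_Icc] <;> omega

end IsHom

end Orientation

/-- let `K ∈ M_n^×` with `s_K < t_K` (`s_K` the least element of `[1,n+1]`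
not in `K`, `t_K` the greatest element of `K`), and let `Ω(K)` be the orientation (encoded
by `dir`) whose source set is `I_t` and whose sink set is `I_s` (a vertex `v ∈ [1,n]` is a
source iff no arrow points into it, i.e. `(2 ≤ v → dir (v−1) = false) ∧ (v ≤ n−1 → dir v =
true)`, and dually for sinks; `I_t = out(K) ∪ {1 if min K ≥ 3} ∪ {n if n+1 ∈ K}` and
`I_s = in(K) ∪ {1 if 1 ∈ K} ∪ {n if t_K ≤ n−1}`, where `out(K) = {v ∈ [1,n] : v ∈ K, v+1 ∉ K}`
and `in(K) = {v ∈ [1,n] : v ∉ K, v+1 ∈ K}`).  Then for every `1 ≤ i < j ≤ n+1`, the space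
`Hom(e((i,j);Ω(K)), e((s_K,t_K);Ω(K)))` has dimension `1` if `i ∉ K` and `j ∈ K` (it is a
complex line), and dimension `0` otherwise. -/
theorem stmt19 (n : ℕ) (hn : 1 ≤ n)
    (K : Finset ℕ) (hK : K ⊆ Finset.Icc 1 (n + 1)) (hKne : K ≠ ∅)
    (hKfull : K ≠ Finset.Icc 1 (n + 1))
    (sK tK : ℕ)
    (hsK1 : sK ∈ Finset.Icc 1 (n + 1)) (hsK2 : sK ∉ K)
    (hsK3 : ∀ k ∈ Finset.Icc 1 (n + 1), k ∉ K → sK ≤ k)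
    (htK1 : tK ∈ K) (htK2 : ∀ k ∈ K, k ≤ tK)
    (hst : sK < tK)
    (dir : ℕ → Bool)
    (hsource : ∀ v : ℕ, 1 ≤ v → v ≤ n →
      (((2 ≤ v → dir (v - 1) = false) ∧ (v ≤ n - 1 → dir v = true)) ↔
        ((v ∈ K ∧ v + 1 ∉ K) ∨ (v = 1 ∧ 1 ∉ K ∧ 2 ∉ K) ∨ (v = n ∧ n + 1 ∈ K))))
    (hsink : ∀ v : ℕ, 1 ≤ v → v ≤ n →
      (((2 ≤ v → dir (v - 1) = true) ∧ (v ≤ n - 1 → dir v = false)) ↔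
        ((v ∉ K ∧ v + 1 ∈ K) ∨ (v = 1 ∧ 1 ∈ K) ∨ (v = n ∧ n ∉ K ∧ n + 1 ∉ K))))
    (i j : ℕ) (hij1 : 1 ≤ i) (hij2 : i < j) (hij3 : j ≤ n + 1) :
    if i ∉ K ∧ j ∈ K then
      ∃ φ : ℕ → ℂ, IsHom n dir (Finset.Icc i (j - 1)) (Finset.Icc sK (tK - 1)) φ ∧
        φ ≠ 0 ∧
        ∀ ψ : ℕ → ℂ, IsHom n dir (Finset.Icc i (j - 1)) (Finset.Icc sK (tK - 1)) ψ →
          ∃ c : ℂ, ψ = c • φ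
    else
      ∀ ψ : ℕ → ℂ, IsHom n dir (Finset.Icc i (j - 1)) (Finset.Icc sK (tK - 1)) ψ → ψ = 0 := by
  have hdir : OrientedBy n dir K := orientedBy_of_sources_of_sinks hsource hsink
  obtain ⟨b, rfl⟩ : ∃ b, j = b + 1 := Nat.exists_eq_succ_of_ne_zero (by omega)
  obtain ⟨d, rfl⟩ : ∃ d, tK = d + 1 := Nat.exists_eq_succ_of_ne_zero (by omega)
  have hdn : d ≤ n := Nat.le_of_succ_le_succ (mem_Icc.1 (hK htK1)).2
  have hbn : b ≤ n := Nat.le_of_succ_le_succ hij3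
  simp only [Nat.add_sub_cancel]
  split_ifs with hc
  · obtain ⟨hi, hj⟩ := hc
    have hsub : Icc i b ⊆ Icc sK d :=
      Icc_subset_Icc (hsK3 i (mem_Icc.2 ⟨hij1, by omega⟩) hi)
        (Nat.le_of_succ_le_succ (htK2 _ hj))
    exact exists_isHom_forall_eq_smul (Icc_subset_Icc hij1 hbn)
      (coe_Icc i b ▸ Set.ordConnected_Icc) (nonempty_Icc.2 (Nat.le_of_lt_succ hij2)) hsub
      fun _ _ ↦ hdir.mem_Icc_of_isArrow hi hj
  · intro ψ hψ
    by_cases hi : i ∈ K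
    · exact hψ.eq_zero_of_left_mem hdir hij1 hbn (mem_Icc.1 hsK1).1 hi hsK2
    · exact hψ.eq_zero_of_right_notMem hdir hij1 hbn hdn (fun hj ↦ hc ⟨hi, hj⟩) htK1
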